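/- arXiv:2208.09022 — 2 statements merged into one kernel-verified Lean document; each statement's English description precedes it below -/
import Mathlib

section
/- Let 1 → G → Ĝ →q→ Γ → 1 be a group extension (G a normal subgroup of Ĝ and q a surjective homomorphism with kernel G). Suppose Ĝ acts on sets E and M on the right and the restricted G-action on E is free. Let s̃: E → M be a G-equivariant map, let G act diagonally on E × M, and let s: E/G → (E×M)/G be the map induced on G-orbit spaces by e ↦ (e, s̃(e)). Equip E/G and (E×M)/G with the right Γ-actions induced by the Ĝ-actions (where [x]·γ := [x·ĝ] for any ĝ with q(ĝ) = γ). Then s̃ is Ĝ-equivariant if and only if s is Γ-equivariant. -/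
/-- Let `1 → N → Ĝ → Γ → 1` be a group extension and let `Ĝ` act on the right
on sets `E` and `M`, with the restricted `N`-action on `E` free. If
`s̃ : E → M` is `N`-equivariant and `s : E/N → (E×M)/N` is the induced map on
`N`-orbit spaces, then `s̃` is `Ĝ`-equivariant if and only if `s` is
`Γ`-equivariant (for the quotient `Γ`-actions `[x]·q(ĝ) = [x·ĝ]`). -/
theorem hat_equivariant_iff_section_gamma_equivariant
    {Ghat Γ E M : Type*} [Group Ghat] [Group Γ]
    (N : Subgroup Ghat) (q : Ghat →* Γ)
    (hq : Function.Surjective q) (hker : q.ker = N)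
    (actE : E → Ghat → E)
    (hE1 : ∀ e, actE e 1 = e)
    (hEmul : ∀ e a b, actE (actE e a) b = actE e (a * b))
    (actM : M → Ghat → M)
    (hM1 : ∀ m, actM m 1 = m)
    (hMmul : ∀ m a b, actM (actM m a) b = actM m (a * b))
    -- the restricted N-action on E is free
    (hfree : ∀ e : E, ∀ g ∈ N, actE e g = e → g = 1)
    -- s̃ : E → M is N-equivariant
    (st : E → M)
    (hstN : ∀ e : E, ∀ g ∈ N, st (actE e g) = actM (st e) g)
    -- orbit relations defining the orbit spaces E/N and (E×M)/N
    (rE : E → E → Prop) (hrE : ∀ e e', rE e e' ↔ ∃ g ∈ N, actE e g = e')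
    (rEM : E × M → E × M → Prop)
    (hrEM : ∀ p p', rEM p p' ↔ ∃ g ∈ N, (actE p.1 g, actM p.2 g) = p') :
    ∃ s : Quot rE → Quot rEM,
      -- s is the map induced on orbit spaces by e ↦ (e, s̃ e)
      (∀ e : E, s (Quot.mk rE e) = Quot.mk rEM (e, st e)) ∧
      -- s̃ is Ĝ-equivariant iff s is Γ-equivariant:
      -- s([e]·q(ĝ)) = s([e])·q(ĝ) reads s([e·ĝ]) = [(e,s̃ e)·ĝ]
      ((∀ (e : E) (gh : Ghat), st (actE e gh) = actM (st e) gh) ↔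
       (∀ (e : E) (gh : Ghat),
          s (Quot.mk rE (actE e gh))
            = Quot.mk rEM (actE e gh, actM (st e) gh))) := by
  have hequiv : Equivalence rEM := by
    refine ⟨fun p => ?_, fun {p p'} h => ?_, fun {p p' p''} h h' => ?_⟩
    · exact (hrEM p p).2 ⟨1, N.one_mem, by rw [hE1, hM1]⟩
    · obtain ⟨g, hg, rfl⟩ := (hrEM p p').1 h
      refine (hrEM _ _).2 ⟨g⁻¹, N.inv_mem hg, ?_⟩
      simp only [hEmul, hMmul, mul_inv_cancel, hE1, hM1]
    · obtain ⟨g, hg, rfl⟩ := (hrEM p p').1 h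
      obtain ⟨k, hk, rfl⟩ := (hrEM _ p'').1 h'
      refine (hrEM _ _).2 ⟨g * k, N.mul_mem hg hk, ?_⟩
      simp only [hEmul, hMmul]
  refine ⟨Quot.lift (fun e => Quot.mk rEM (e, st e)) ?_, fun _ => rfl, ?_, ?_⟩
  · intro e e' h
    obtain ⟨g, hg, rfl⟩ := (hrE e e').1 h
    exact Quot.sound ((hrEM _ _).2 ⟨g, hg, by rw [hstN e g hg]⟩)
  · intro h e gh
    change Quot.mk rEM (actE e gh, st (actE e gh)) = _
    rw [h]
  · intro h e gh
    have hrel : rEM (actE e gh, st (actE e gh)) (actE e gh, actM (st e) gh) :=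
      hequiv.eqvGen_iff.1 (Quot.eqvGen_exact (h e gh))
    obtain ⟨g, hg, hgeq⟩ := (hrEM _ _).1 hrel
    obtain ⟨hgE, hgM⟩ := Prod.mk.inj hgeq
    -- Freeness forces the element of `N` relating the two pairs to be trivial.
    obtain rfl := hfree _ g hg hgE
    rwa [hM1] at hgM
end

section
/- Invariance of a reduction of structure group: let Ĝ = G ×_{(θ,c)} Γ, let E be a right Ĝ-set whose restricted G-action (via g ↦ (g,1)) is free, and let H ⊆ G be a subgroup with θ_γ(H) = H for all γ ∈ Γ. Equip the coset space G/H with the right G-action (gH)·g1 := (g1^{-1}g)H and the right Γ-action (gH)·γ := θ_γ^{-1}(g)H. Let s: E → G/H be a G-equivariant map, i.e. s(e·(g,1)) = s(e)·g for all e ∈ E and g ∈ G, and let E_s := { e ∈ E : s(e) = H } be the preimage of the identity coset. Then E_s·(1,γ) = E_s for all γ ∈ Γ if and only if s is Γ-equivariant, i.e. s(e·(1,γ)) = s(e)·γ for all e ∈ E and γ ∈ Γ. -/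
/-- A 2-cocycle of `Γ` with values in the centre of `G`, for the `Γ`-action on `G`
given by `θ`. -/
def IsTwoCocycle {G Γ : Type*} [Group G] [Group Γ] (θ : Γ →* MulAut G)
    (c : Γ → Γ → G) : Prop :=
  (∀ γ1 γ2, c γ1 γ2 ∈ Subgroup.center G) ∧
  (∀ γ, c γ 1 = 1) ∧ (∀ γ, c 1 γ = 1) ∧
  (∀ γ0 γ1 γ2, θ γ0 (c γ1 γ2) * c γ0 (γ1 * γ2) = c γ0 γ1 * c (γ0 * γ1) γ2)

/-- The twisted multiplication on `G × Γ` defined by `θ` and `c`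
(the multiplication of the twisted product `Ĝ = G ×_{(θ,c)} Γ`). -/
def tmul {G Γ : Type*} [Group G] [Group Γ] (θ : Γ →* MulAut G) (c : Γ → Γ → G)
    (a b : G × Γ) : G × Γ :=
  (a.1 * θ a.2 b.1 * c a.2 b.2, a.2 * b.2)

/-- Invariance of a reduction of structure group: let `E` be a right `Ĝ`-set,
`Ĝ = G ×_{(θ,c)} Γ`, with free restricted `G`-action, let `H ⊆ G` be a
`θ`-invariant subgroup, and let `s : E → G/H` be `G`-equivariant for the right
`G`-action `(gH)·g1 = (g1⁻¹g)H` on `G/H`. Then the set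
`E_s = s⁻¹(H)` satisfies `E_s·(1,γ) = E_s` for all `γ` if and only if `s` is
`Γ`-equivariant for the right `Γ`-action `(gH)·γ = θ_γ⁻¹(g)H` on `G/H`. -/
theorem reduction_invariant_iff_section_equivariant {G Γ E : Type*}
    [Group G] [Group Γ] (θ : Γ →* MulAut G) (c : Γ → Γ → G)
    (hc : IsTwoCocycle θ c)
    (H : Subgroup G)
    -- H is invariant under the Γ-action: θ_γ(H) = H
    (hH : ∀ γ : Γ, Subgroup.map (θ γ).toMonoidHom H = H)
    (actE : E → G × Γ → E)
    (h1 : ∀ e, actE e ((1 : G), (1 : Γ)) = e)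
    (hmul : ∀ e a b, actE (actE e a) b = actE e (tmul θ c a b))
    -- the restricted G-action on E is free
    (hfree : ∀ (e : E) (g : G), actE e (g, 1) = e → g = 1)
    -- the right G-action on G/H: (gH)·g1 = (g1⁻¹ g)H
    (cosG : G ⧸ H → G → G ⧸ H)
    (hcosG : ∀ g g1 : G,
      cosG (QuotientGroup.mk g) g1 = QuotientGroup.mk (g1⁻¹ * g))
    -- the right Γ-action on G/H: (gH)·γ = θ_γ⁻¹(g)H
    (cosΓ : G ⧸ H → Γ → G ⧸ H)
    (hcosΓ : ∀ (g : G) (γ : Γ),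
      cosΓ (QuotientGroup.mk g) γ = QuotientGroup.mk ((θ γ)⁻¹ g))
    -- s : E → G/H is G-equivariant
    (s : E → G ⧸ H)
    (hsG : ∀ (e : E) (g : G), s (actE e (g, 1)) = cosG (s e) g) :
    -- E_s·(1,γ) = E_s for all γ iff s is Γ-equivariant
    (∀ γ : Γ, (fun e => actE e ((1 : G), γ)) '' {e : E | s e = QuotientGroup.mk (1 : G)}
        = {e : E | s e = QuotientGroup.mk (1 : G)}) ↔
    (∀ (e : E) (γ : Γ), s (actE e ((1 : G), γ)) = cosΓ (s e) γ) := by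
  obtain ⟨-, hc1, hc2, -⟩ := hc
  constructor
  · intro h e γ
    obtain ⟨g, hg⟩ := QuotientGroup.mk_surjective (s e)
    obtain ⟨x, hx⟩ := QuotientGroup.mk_surjective (s (actE e (1, γ)))
    have hmem : actE e (g, 1) ∈ {e : E | s e = QuotientGroup.mk (1 : G)} := by
      simp [hsG, ← hg, hcosG]
    have himage : s (actE (actE e (g, 1)) (1, γ)) = QuotientGroup.mk (1 : G) :=
      (h γ).subset ⟨_, hmem, rfl⟩
    have hcomm : actE (actE e (g, 1)) (1, γ) = actE (actE e (1, γ)) ((θ γ)⁻¹ g, 1) := by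
      simp [hmul, tmul, hc1, hc2]
    rw [hcomm, hsG, ← hx, hcosG] at himage
    rw [← hg, ← hx, hcosΓ]
    symm
    rw [QuotientGroup.eq]
    simpa using QuotientGroup.eq.mp himage.symm
  · intro h γ
    ext f
    simp only [Set.mem_image, Set.mem_ofPred_eq]
    constructor
    · rintro ⟨e, he, rfl⟩
      rw [h, he, hcosΓ, map_one]
    · intro hf
      have hinv : actE (actE f ((c γ⁻¹ γ)⁻¹, γ⁻¹)) (1, γ) = f := by
        simp [hmul, tmul, h1]
      refine ⟨_, ?_, hinv⟩
      obtain ⟨g, hg⟩ := QuotientGroup.mk_surjective (s (actE f ((c γ⁻¹ γ)⁻¹, γ⁻¹)))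
      rw [← hinv, h, ← hg, hcosΓ] at hf
      have hmem : (θ γ)⁻¹ g ∈ H := by simpa using QuotientGroup.eq.mp hf.symm
      have hgH : g ∈ H := by
        rw [← hH γ]
        exact ⟨_, hmem, by simp⟩
      rw [← hg]
      symm
      rw [QuotientGroup.eq]
      simpa using hgH
end
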